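/- arXiv:2212.13343 — 2 statements merged into one kernel-verified Lean document; each statement's English description precedes it below -/
import Mathlib

section
/- Let C₀ > 0 and let 0 < β < α̃ ≤ 1. Let K : ℝ²∖{0} → ℝ be continuously differentiable with |K(x)| ≤ C₀|x|^{-1} and |∇K(x)| ≤ C₀|x|^{-2} for all x ≠ 0. Let f ∈ L¹(ℝ²;ℝ²) ∩ L²(ℝ²;ℝ²) satisfy ∫_{ℝ²} f(y) dy = 0. Then there exists a constant C = C(C₀, α̃, β) > 0 such that ‖ |x|^{β} (K∗f) ‖_{L²(ℝ²∖B₁)} ≤ C ( ‖ |y|^{α̃} f ‖_{L^{4/(4−α̃+β)}(ℝ²)} + ‖ |y|^{α̃} f ‖_{L¹(ℝ²)} ), where (K∗f)(x) = ∫_{ℝ²} K(x−y) f(y) dy. -/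
open MeasureTheory Real Set Metric

noncomputable section

abbrev E2 := EuclideanSpace ℝ (Fin 2)

/-!
Since `∫ f = 0`, the convolution is `(K ∗ f) x = ∫ (K (x - y) - K x) • f y`. For `1 ≤ ‖x‖` the
increment of `K` is at most a multiple of `‖x‖ ^ (-β) * ‖y‖ ^ α * (Φ x + Φ (x - y))`, where
`Φ z = ‖z‖ ^ (-s)` inside the unit ball and `Φ z = ‖z‖ ^ (-(s + α - β))` outside: use the mean value
inequality when `‖y‖ ≤ ‖x‖ / 2`, and estimate the two values of `K` separately when `‖y‖` is larger.
With `w y = ‖y‖ ^ α * ‖f y‖` this bounds the weighted convolution by `‖w‖₁ Φ + w ∗ Φ`. The part of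
`Φ` outside the ball lies in `L^q` and is paired with `w ∈ L¹`; the part inside lies in `L^r` with
`p⁻¹ + r⁻¹ = 1 + q⁻¹` and is paired with `w ∈ L^p` by Young's inequality.
-/

section ENNRealLp

variable {X : Type*} [MeasurableSpace X] {μ : Measure X} {p : ℝ}

lemma eLpNorm_ofReal_eq_lintegral_rpow (f : X → ENNReal) (hp : 0 < p) :
    eLpNorm f (ENNReal.ofReal p) μ = (∫⁻ x, f x ^ p ∂μ) ^ p⁻¹ := by
  rw [eLpNorm_eq_lintegral_rpow_enorm_toReal (by simpa using hp) ENNReal.ofReal_ne_top,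
    ENNReal.toReal_ofReal hp.le, one_div]
  rfl

lemma eLpNorm_mul_const_ennreal {f : X → ENNReal} (hf : AEMeasurable f μ) (c : ENNReal)
    (hp : 0 < p) :
    eLpNorm (fun x => f x * c) (ENNReal.ofReal p) μ = eLpNorm f (ENNReal.ofReal p) μ * c := by
  simp only [eLpNorm_ofReal_eq_lintegral_rpow _ hp, ENNReal.mul_rpow_of_nonneg _ _ hp.le]
  rw [lintegral_mul_const'' _ (hf.pow_const p), ENNReal.mul_rpow_of_nonneg _ _ (by positivity),
    ENNReal.rpow_rpow_inv hp.ne']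

end ENNRealLp

section Young

variable {G : Type*} [AddGroup G] [MeasurableSpace G] [MeasurableAdd₂ G] [MeasurableNeg G]
  {μ : Measure G} [μ.IsAddLeftInvariant] {f g : G → ENNReal} {p q r : ℝ}

lemma lintegral_neg_add_eq_self [μ.IsNegInvariant] (g : G → ENNReal) (x : G) :
    ∫⁻ y, g (-y + x) ∂μ = ∫⁻ y, g y ∂μ :=
  calc ∫⁻ y, g (-y + x) ∂μ = ∫⁻ y, g (-(x + y) + x) ∂μ :=
        (lintegral_add_left_eq_self (fun y => g (-y + x)) x).symm
    _ = ∫⁻ y, g (-y) ∂μ := by simp only [neg_add_rev, neg_add_cancel_right]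
    _ = ∫⁻ y, g y ∂μ := lintegral_neg_eq_self g

variable [SFinite μ]

lemma lintegral_lconvolution (hf : AEMeasurable f μ) (hg : AEMeasurable g μ) :
    ∫⁻ x, (f ⋆ₗ[μ] g) x ∂μ = (∫⁻ y, f y ∂μ) * ∫⁻ y, g y ∂μ :=
  calc ∫⁻ x, (f ⋆ₗ[μ] g) x ∂μ = ∫⁻ y, ∫⁻ x, f y * g (-y + x) ∂μ ∂μ := by
        simp only [lconvolution_def]
        exact lintegral_lintegral_swap (by fun_prop)
    _ = ∫⁻ y, f y * ∫⁻ x, g x ∂μ ∂μ := by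
        refine lintegral_congr fun y => ?_
        have hgy : AEMeasurable (fun x => g (-y + x)) μ :=
          hg.comp_quasiMeasurePreserving (measurePreserving_add_left μ (-y)).quasiMeasurePreserving
        rw [lintegral_const_mul'' _ hgy, lintegral_add_left_eq_self]
    _ = (∫⁻ y, f y ∂μ) * ∫⁻ y, g y ∂μ := lintegral_mul_const'' _ hf

lemma lconvolution_add (hf : AEMeasurable f μ) (hg : AEMeasurable g μ) (h : G → ENNReal) :
    f ⋆ₗ[μ] (g + h) = f ⋆ₗ[μ] g + f ⋆ₗ[μ] h := by
  ext x
  simp only [lconvolution_def, Pi.add_apply, mul_add]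
  exact lintegral_add_left' (by fun_prop) _

variable [μ.IsNegInvariant]

-- Hölder with exponents `r`, `(p⁻¹ - r⁻¹)⁻¹`, `(q⁻¹ - r⁻¹)⁻¹` applied to
-- `f * g = (f ^ p * g ^ q) ^ r⁻¹ * (f ^ p) ^ (p⁻¹ - r⁻¹) * (g ^ q) ^ (q⁻¹ - r⁻¹)`.
lemma lconvolution_le_rpow_lconvolution_mul (hf : AEMeasurable f μ) (hg : AEMeasurable g μ)
    (hp : 1 ≤ p) (hq : 1 ≤ q) (hr : 0 < r) (hpqr : p⁻¹ + q⁻¹ = 1 + r⁻¹) (x : G) :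
    (f ⋆ₗ[μ] g) x ≤ ((fun y => f y ^ p) ⋆ₗ[μ] fun y => g y ^ q) x ^ r⁻¹ *
      ((∫⁻ y, f y ^ p ∂μ) ^ (p⁻¹ - r⁻¹) * (∫⁻ y, g y ^ q ∂μ) ^ (q⁻¹ - r⁻¹)) := by
  have hp0 : 0 < p := by linarith
  have hq0 : 0 < q := by linarith
  have hpr : 0 ≤ p⁻¹ - r⁻¹ := by linarith [inv_le_one_of_one_le₀ hq]
  have hqr : 0 ≤ q⁻¹ - r⁻¹ := by linarith [inv_le_one_of_one_le₀ hp]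
  have split_mul (a b : ENNReal) :
      a * b = (a ^ p * b ^ q) ^ r⁻¹ * ((a ^ p) ^ (p⁻¹ - r⁻¹) * (b ^ q) ^ (q⁻¹ - r⁻¹)) := by
    have split (c : ENNReal) {t : ℝ} (ht : 0 < t) (htr : 0 ≤ t⁻¹ - r⁻¹) :
        c = (c ^ t) ^ r⁻¹ * (c ^ t) ^ (t⁻¹ - r⁻¹) := by
      rw [← ENNReal.rpow_add_of_nonneg _ _ (by positivity) htr, ← ENNReal.rpow_mul,
        add_sub_cancel, mul_inv_cancel₀ ht.ne', ENNReal.rpow_one]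
    rw [ENNReal.mul_rpow_of_nonneg _ _ (by positivity), mul_mul_mul_comm, ← split a hp0 hpr,
      ← split b hq0 hqr]
  have holder := ENNReal.lintegral_mul_prod_norm_pow_le (μ := μ) Finset.univ
    (g := fun y => f y ^ p * g (-y + x) ^ q)
    (f := ![fun y => f y ^ p, fun y => g (-y + x) ^ q]) (p := ![p⁻¹ - r⁻¹, q⁻¹ - r⁻¹])
    (by fun_prop) (by simp only [Finset.mem_univ, forall_const, Fin.forall_fin_two]; exact
      ⟨hf.pow_const _, AEMeasurable.pow_const (f := fun y => g (-y + x)) (by fun_prop) _⟩) r⁻¹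
    (by simp only [Fin.sum_univ_two, Matrix.cons_val_zero, Matrix.cons_val_one]; linarith)
    (by positivity) (by simpa [Fin.forall_fin_two] using ⟨by linarith, by linarith⟩)
  simp only [Fin.prod_univ_two, Matrix.cons_val_zero, Matrix.cons_val_one, ← split_mul,
    lintegral_neg_add_eq_self (fun y => g y ^ q) x] at holder
  exact holder

theorem eLpNorm_lconvolution_le (hf : AEMeasurable f μ) (hg : AEMeasurable g μ)
    (hp : 1 ≤ p) (hq : 1 ≤ q) (hr : 0 < r) (hpqr : p⁻¹ + q⁻¹ = 1 + r⁻¹) :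
    eLpNorm (f ⋆ₗ[μ] g) (ENNReal.ofReal r) μ ≤
      eLpNorm f (ENNReal.ofReal p) μ * eLpNorm g (ENNReal.ofReal q) μ := by
  have hpr : 0 ≤ p⁻¹ - r⁻¹ := by linarith [inv_le_one_of_one_le₀ hq]
  have hqr : 0 ≤ q⁻¹ - r⁻¹ := by linarith [inv_le_one_of_one_le₀ hp]
  rw [eLpNorm_ofReal_eq_lintegral_rpow _ hr, eLpNorm_ofReal_eq_lintegral_rpow f (by linarith),
    eLpNorm_ofReal_eq_lintegral_rpow g (by linarith), ENNReal.rpow_inv_le_iff hr]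
  set A := ∫⁻ y, f y ^ p ∂μ
  set B := ∫⁻ y, g y ^ q ∂μ
  calc ∫⁻ x, (f ⋆ₗ[μ] g) x ^ r ∂μ
      ≤ ∫⁻ x, ((fun y => f y ^ p) ⋆ₗ[μ] fun y => g y ^ q) x *
          (A ^ (p⁻¹ - r⁻¹) * B ^ (q⁻¹ - r⁻¹)) ^ r ∂μ := by
        refine lintegral_mono fun x => ?_
        grw [lconvolution_le_rpow_lconvolution_mul hf hg hp hq hr hpqr x,
          ENNReal.mul_rpow_of_nonneg _ _ hr.le, ENNReal.rpow_inv_rpow hr.ne']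
    _ = A * B * (A ^ (p⁻¹ - r⁻¹) * B ^ (q⁻¹ - r⁻¹)) ^ r := by
        rw [lintegral_mul_const'' _ (by fun_prop),
          lintegral_lconvolution (hf.pow_const p) (hg.pow_const q)]
    _ = ((A * B) ^ r⁻¹ * (A ^ (p⁻¹ - r⁻¹) * B ^ (q⁻¹ - r⁻¹))) ^ r := by
        rw [ENNReal.mul_rpow_of_nonneg ((A * B) ^ r⁻¹) _ hr.le, ENNReal.rpow_inv_rpow hr.ne']
    _ = (A ^ p⁻¹ * B ^ q⁻¹) ^ r := by
        rw [ENNReal.mul_rpow_of_nonneg A B (by positivity), mul_mul_mul_comm,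
          ← ENNReal.rpow_add_of_nonneg _ _ (by positivity) hpr,
          ← ENNReal.rpow_add_of_nonneg _ _ (by positivity) hqr,
          add_sub_cancel, add_sub_cancel]

lemma eLpNorm_lconvolution_le_add {S : Set G} (hS : MeasurableSet S) (hf : AEMeasurable f μ)
    (hg : AEMeasurable g μ) (hp : 1 ≤ p) (hq : 1 ≤ q) (hr : 1 ≤ r)
    (hpqr : p⁻¹ + q⁻¹ = 1 + r⁻¹) :
    eLpNorm (f ⋆ₗ[μ] g) (ENNReal.ofReal r) μ ≤
      eLpNorm f (ENNReal.ofReal p) μ * eLpNorm g (ENNReal.ofReal q) (μ.restrict S) +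
        eLpNorm f 1 μ * eLpNorm g (ENNReal.ofReal r) (μ.restrict Sᶜ) := by
  have hgS : AEMeasurable (S.indicator g) μ := hg.indicator hS
  have hgSc : AEMeasurable (Sᶜ.indicator g) μ := hg.indicator hS.compl
  calc eLpNorm (f ⋆ₗ[μ] g) (ENNReal.ofReal r) μ
      = eLpNorm (f ⋆ₗ[μ] S.indicator g + f ⋆ₗ[μ] Sᶜ.indicator g) (ENNReal.ofReal r) μ := by
        rw [← lconvolution_add hf hgS, indicator_self_add_compl]
    _ ≤ eLpNorm (f ⋆ₗ[μ] S.indicator g) (ENNReal.ofReal r) μ +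
          eLpNorm (f ⋆ₗ[μ] Sᶜ.indicator g) (ENNReal.ofReal r) μ :=
        eLpNorm_add_le (aemeasurable_lconvolution hf hgS).aestronglyMeasurable
          (aemeasurable_lconvolution hf hgSc).aestronglyMeasurable (by simpa using hr)
    _ ≤ _ := by
        grw [eLpNorm_lconvolution_le hf hgS hp hq (by linarith) hpqr,
          eLpNorm_lconvolution_le hf hgSc le_rfl hr (by linarith) (by rw [inv_one]),
          eLpNorm_indicator_eq_eLpNorm_restrict hS,
          eLpNorm_indicator_eq_eLpNorm_restrict hS.compl, ENNReal.ofReal_one]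

end Young

section TwoScalePower

/-- The radial kernel `‖z‖ ^ (-s) * max 1 ‖z‖ ^ (-γ)`, singular like `‖z‖ ^ (-s)` at the origin and
decaying like `‖z‖ ^ (-(s + γ))` at infinity. It dominates the increments of a kernel of order `-s`
once a moment of order `γ` has been gained from the cancellation. -/
def twoScalePower {E : Type*} [Norm E] (s γ : ℝ) (z : E) : ℝ :=
  ‖z‖ ^ (-s) * max 1 ‖z‖ ^ (-γ)

variable {E : Type*} [NormedAddCommGroup E] {s γ q : ℝ} {z : E}

lemma twoScalePower_nonneg : 0 ≤ twoScalePower s γ z := by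
  unfold twoScalePower
  positivity

lemma twoScalePower_of_norm_le_one (hz : ‖z‖ ≤ 1) : twoScalePower s γ z = ‖z‖ ^ (-s) := by
  rw [twoScalePower, max_eq_left hz, one_rpow, mul_one]

lemma twoScalePower_of_one_le_norm (hz : 1 ≤ ‖z‖) :
    twoScalePower s γ z = ‖z‖ ^ (-(s + γ)) := by
  rw [twoScalePower, max_eq_right hz, ← rpow_add (by linarith), neg_add]

variable [MeasurableSpace E] [BorelSpace E] {μ : Measure E}

@[fun_prop]
lemma measurable_twoScalePower : Measurable (twoScalePower s γ : E → ℝ) := by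
  unfold twoScalePower
  fun_prop

lemma memLp_twoScalePower_iff {S : Set E} (hq : 0 < q) :
    MemLp (twoScalePower s γ) (ENNReal.ofReal q) (μ.restrict S) ↔
      IntegrableOn (fun z : E => twoScalePower s γ z ^ q) S μ := by
  rw [← integrable_norm_rpow_iff measurable_twoScalePower.aestronglyMeasurable
    (by simpa using hq) ENNReal.ofReal_ne_top, ENNReal.toReal_ofReal hq.le]
  simp only [norm_of_nonneg twoScalePower_nonneg, IntegrableOn]

variable [NormedSpace ℝ E] [FiniteDimensional ℝ E] [μ.IsAddHaarMeasure]

lemma integrableOn_norm_rpow_compl_ball {t : ℝ} (ht : Module.finrank ℝ E < t) :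
    IntegrableOn (fun z : E => ‖z‖ ^ (-t)) (ball 0 1)ᶜ μ := by
  refine Integrable.mono' ((integrable_one_add_norm ht).const_mul (2 ^ t)).integrableOn
    (Measurable.aestronglyMeasurable (by fun_prop))
    (ae_restrict_of_forall_mem measurableSet_ball.compl fun z hz => ?_)
  have hz1 : 1 ≤ ‖z‖ := by simpa using hz
  calc ‖‖z‖ ^ (-t)‖ = 2 ^ t * (2 * ‖z‖) ^ (-t) := by
        rw [norm_of_nonneg (by positivity), mul_rpow two_pos.le (norm_nonneg z), ← mul_assoc,
          ← rpow_add two_pos, add_neg_cancel, rpow_zero, one_mul]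
    _ ≤ 2 ^ t * (1 + ‖z‖) ^ (-t) := by
        gcongr 2 ^ t * ?_
        exact rpow_le_rpow_of_nonpos (by positivity) (by linarith) (by linarith)

lemma memLp_twoScalePower_ball (hs : 0 ≤ s) (hq : 0 < q) (hqs : q * s < Module.finrank ℝ E) :
    MemLp (twoScalePower s γ) (ENNReal.ofReal q) (μ.restrict (ball 0 1)) := by
  rw [memLp_twoScalePower_iff hq]
  refine integrableOn_ball_of_norm_le_rpow (C := 1) ?_ hqs ?_
    (Measurable.aestronglyMeasurable (by fun_prop))
  · exact_mod_cast (by positivity : 0 ≤ q * s).trans_lt hqs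
  · refine ae_restrict_of_forall_mem measurableSet_ball fun z hz => le_of_eq ?_
    rw [norm_of_nonneg (rpow_nonneg twoScalePower_nonneg q),
      twoScalePower_of_norm_le_one (mem_ball_zero_iff.1 hz).le, ← rpow_mul (norm_nonneg z),
      neg_mul, mul_comm s, one_mul]

lemma memLp_twoScalePower_compl_ball (hq : 0 < q) (hqs : Module.finrank ℝ E < q * (s + γ)) :
    MemLp (twoScalePower s γ) (ENNReal.ofReal q) (μ.restrict (ball (0 : E) 1)ᶜ) := by
  rw [memLp_twoScalePower_iff hq]
  refine (integrableOn_norm_rpow_compl_ball hqs).congr_fun (fun z hz => ?_)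
    measurableSet_ball.compl
  rw [twoScalePower_of_one_le_norm (by simpa using hz), ← rpow_mul (norm_nonneg z),
    neg_mul, mul_comm q]

end TwoScalePower

section KernelBound

lemma le_rpow_mul_rpow_one_sub {a b α : ℝ} (ha : 0 ≤ a) (hab : a ≤ b) (hα : α ≤ 1) :
    a ≤ a ^ α * b ^ (1 - α) :=
  calc a = a ^ α * a ^ (1 - α) := by
        rw [← rpow_add' ha (by norm_num), add_sub_cancel, rpow_one]
    _ ≤ a ^ α * b ^ (1 - α) := by
        gcongr

lemma rpow_le_six_mul_rpow_mul_rpow {a b w α β : ℝ} (ha : 0 ≤ a) (hab : a ≤ 2 * b) (hw : 0 < w)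
    (hwb : w ≤ 3 * b) (hβ : 0 ≤ β) (hβα : β ≤ α) (hα : α ≤ 1) :
    a ^ β ≤ 6 * w ^ (-(α - β)) * b ^ α := by
  have hb : 0 < b := by linarith
  have rpow_le_self {c t : ℝ} (hc : 1 ≤ c) (ht : t ≤ 1) : c ^ t ≤ c := by
    simpa using rpow_le_rpow_of_exponent_le hc ht
  have hdecay : b ^ (-(α - β)) ≤ 3 * w ^ (-(α - β)) :=
    calc b ^ (-(α - β)) ≤ (w / 3) ^ (-(α - β)) :=
          rpow_le_rpow_of_nonpos (by positivity) (by linarith) (by linarith)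
      _ = 3 ^ (α - β) * w ^ (-(α - β)) := by
          rw [div_rpow hw.le (by norm_num), rpow_neg (by norm_num : (0 : ℝ) ≤ 3), div_inv_eq_mul,
            mul_comm]
      _ ≤ 3 * w ^ (-(α - β)) := by
          gcongr
          exact rpow_le_self (by norm_num) (by linarith)
  calc a ^ β ≤ (2 * b) ^ β := by gcongr
    _ = 2 ^ β * (b ^ (-(α - β)) * b ^ α) := by
        rw [mul_rpow two_pos.le hb.le, ← rpow_add hb, neg_sub, sub_add_cancel]
    _ ≤ 2 * (3 * w ^ (-(α - β)) * b ^ α) := by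
        gcongr
        exact rpow_le_self (by norm_num) (by linarith)
    _ = 6 * w ^ (-(α - β)) * b ^ α := by ring

/-- `K` is differentiable away from the origin, where `‖K z‖ ≤ C * ‖z‖ ^ (-s)` and
`‖DK z‖ ≤ C * ‖z‖ ^ (-(s + 1))`: the size and smoothness bounds of a singular kernel that is
homogeneous of degree `-s`. Nothing is required of `K 0`. -/
structure IsSingularKernel {E V : Type*} [NormedAddCommGroup E] [NormedSpace ℝ E]
    [NormedAddCommGroup V] [NormedSpace ℝ V] (K : E → V) (s C : ℝ) : Prop where
  differentiableOn : DifferentiableOn ℝ K {0}ᶜ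
  norm_le : ∀ z ≠ 0, ‖K z‖ ≤ C * ‖z‖ ^ (-s)
  norm_fderiv_le : ∀ z ≠ 0, ‖fderiv ℝ K z‖ ≤ C * ‖z‖ ^ (-(s + 1))

namespace IsSingularKernel

variable {E V : Type*} [NormedAddCommGroup E] [NormedSpace ℝ E] [NormedAddCommGroup V]
  [NormedSpace ℝ V] {K : E → V} {s C α β : ℝ} {x y z : E}

lemma constant_nonneg (hK : IsSingularKernel K s C) (hx : x ≠ 0) : 0 ≤ C :=
  nonneg_of_mul_nonneg_left ((norm_nonneg _).trans (hK.norm_le x hx))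
    (rpow_pos_of_pos (norm_pos_iff.2 hx) _)

lemma norm_sub_le_of_norm_le_half (hK : IsSingularKernel K s C) (hs : 0 ≤ s) (hx : x ≠ 0)
    (hy : ‖y‖ ≤ ‖x‖ / 2) :
    ‖K (x - y) - K x‖ ≤ 2 ^ (s + 1) * C * ‖x‖ ^ (-(s + 1)) * ‖y‖ := by
  have hC := hK.constant_nonneg hx
  have hx0 : 0 < ‖x‖ := norm_pos_iff.2 hx
  have half_le : ∀ z ∈ closedBall x (‖x‖ / 2), ‖x‖ / 2 ≤ ‖z‖ := fun z hz => by
    linarith [norm_sub_norm_le x z, mem_closedBall_iff_norm'.1 hz]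
  have ne_zero : ∀ z ∈ closedBall x (‖x‖ / 2), z ≠ 0 := fun z hz =>
    norm_pos_iff.1 ((half_pos hx0).trans_le (half_le z hz))
  calc ‖K (x - y) - K x‖ ≤ C * (‖x‖ / 2) ^ (-(s + 1)) * ‖x - y - x‖ := by
        refine (convex_closedBall x (‖x‖ / 2)).norm_image_sub_le_of_norm_fderiv_le
          (fun z hz =>
            hK.differentiableOn.differentiableAt (isOpen_compl_singleton.mem_nhds (ne_zero z hz)))
          (fun z hz => (hK.norm_fderiv_le z (ne_zero z hz)).trans ?_)
          (mem_closedBall_self (by positivity)) (by simpa [mem_closedBall_iff_norm] using hy)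
        gcongr C * ?_
        exact rpow_le_rpow_of_nonpos (by positivity) (half_le z hz) (by linarith)
    _ = 2 ^ (s + 1) * C * ‖x‖ ^ (-(s + 1)) * ‖y‖ := by
        rw [div_rpow hx0.le two_pos.le, rpow_neg two_pos.le, div_inv_eq_mul, sub_sub_cancel_left,
          norm_neg]
        ring

lemma rpow_norm_mul_norm_sub_le_of_norm_le_half (hK : IsSingularKernel K s C) (hs : 0 ≤ s)
    (hα : α ≤ 1) (hx : x ≠ 0) (hy : ‖y‖ ≤ ‖x‖ / 2) :
    ‖x‖ ^ β * ‖K (x - y) - K x‖ ≤ 2 ^ (s + 1) * C * ‖x‖ ^ (-(s + (α - β))) * ‖y‖ ^ α := by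
  have hC := hK.constant_nonneg hx
  have hx0 : 0 < ‖x‖ := norm_pos_iff.2 hx
  calc ‖x‖ ^ β * ‖K (x - y) - K x‖
      ≤ ‖x‖ ^ β * (2 ^ (s + 1) * C * ‖x‖ ^ (-(s + 1)) * (‖y‖ ^ α * ‖x‖ ^ (1 - α))) := by
        grw [hK.norm_sub_le_of_norm_le_half hs hx hy,
          ← le_rpow_mul_rpow_one_sub (norm_nonneg y) (by linarith : ‖y‖ ≤ ‖x‖) hα]
    _ = 2 ^ (s + 1) * C * (‖x‖ ^ β * ‖x‖ ^ (-(s + 1)) * ‖x‖ ^ (1 - α)) * ‖y‖ ^ α := by ring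
    _ = 2 ^ (s + 1) * C * ‖x‖ ^ (-(s + (α - β))) * ‖y‖ ^ α := by
        rw [← rpow_add hx0, ← rpow_add hx0]
        ring_nf

lemma rpow_norm_mul_norm_le (hK : IsSingularKernel K s C) (hβ : 0 ≤ β) (hβα : β ≤ α) (hα : α ≤ 1)
    (hx : 1 ≤ ‖x‖) (hxy : ‖x‖ ≤ 2 * ‖y‖) (hz : z ≠ 0) (hzy : ‖z‖ ≤ 3 * ‖y‖) :
    ‖x‖ ^ β * ‖K z‖ ≤ 6 * C * twoScalePower s (α - β) z * ‖y‖ ^ α :=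
  calc ‖x‖ ^ β * ‖K z‖ ≤ 6 * max 1 ‖z‖ ^ (-(α - β)) * ‖y‖ ^ α * (C * ‖z‖ ^ (-s)) := by
        grw [hK.norm_le z hz, rpow_le_six_mul_rpow_mul_rpow (w := max 1 ‖z‖) (norm_nonneg x) hxy
          (by positivity) (max_le (by linarith) hzy) hβ hβα hα]
        exact mul_nonneg (hK.constant_nonneg hz) (by positivity)
    _ = 6 * C * twoScalePower s (α - β) z * ‖y‖ ^ α := by
        rw [twoScalePower]
        ring

theorem rpow_norm_mul_norm_sub_le (hK : IsSingularKernel K s C) (hs : 0 ≤ s) (hβ : 0 ≤ β)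
    (hβα : β ≤ α) (hα : α ≤ 1) (hx : 1 ≤ ‖x‖) (hyx : y ≠ x) :
    ‖x‖ ^ β * ‖K (x - y) - K x‖ ≤ 6 * 2 ^ s * C *
      (‖y‖ ^ α * (twoScalePower s (α - β) x + twoScalePower s (α - β) (x - y))) := by
  have hx0 : x ≠ 0 := norm_pos_iff.1 (by linarith)
  have hC := hK.constant_nonneg hx0
  set Φ : E → ℝ := twoScalePower s (α - β)
  have hΦ (z : E) : 0 ≤ Φ z := twoScalePower_nonneg
  rcases le_total ‖y‖ (‖x‖ / 2) with hy | hy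
  · calc ‖x‖ ^ β * ‖K (x - y) - K x‖ ≤ 2 ^ (s + 1) * C * Φ x * ‖y‖ ^ α := by
          rw [show Φ x = _ from twoScalePower_of_one_le_norm hx]
          exact hK.rpow_norm_mul_norm_sub_le_of_norm_le_half hs hα hx0 hy
      _ = 2 * 2 ^ s * C * (‖y‖ ^ α * Φ x) := by
          rw [rpow_add two_pos, rpow_one]
          ring
      _ ≤ 6 * 2 ^ s * C * (‖y‖ ^ α * (Φ x + Φ (x - y))) := by
          gcongr
          · exact mul_nonneg (by positivity) (hΦ x)
          · norm_num
          · exact le_add_of_nonneg_right (hΦ _)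
  · calc ‖x‖ ^ β * ‖K (x - y) - K x‖ ≤ ‖x‖ ^ β * ‖K x‖ + ‖x‖ ^ β * ‖K (x - y)‖ := by
          grw [norm_sub_le, mul_add, add_comm]
      _ ≤ 6 * C * Φ x * ‖y‖ ^ α + 6 * C * Φ (x - y) * ‖y‖ ^ α :=
          add_le_add
            (hK.rpow_norm_mul_norm_le hβ hβα hα hx (by linarith) hx0 (by linarith))
            (hK.rpow_norm_mul_norm_le hβ hβα hα hx (by linarith) (sub_ne_zero.2 hyx.symm)
              (by linarith [norm_sub_le x y]))
      _ = 6 * 1 * C * (‖y‖ ^ α * (Φ x + Φ (x - y))) := by ring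
      _ ≤ 6 * 2 ^ s * C * (‖y‖ ^ α * (Φ x + Φ (x - y))) := by
          gcongr
          · exact mul_nonneg (by positivity) (add_nonneg (hΦ _) (hΦ _))
          · exact one_le_rpow one_le_two hs

end IsSingularKernel

end KernelBound

section WeightedConvolution

lemma enorm_integral_smul_le_lintegral_enorm_sub {X F : Type*} [MeasurableSpace X] {μ : Measure X}
    [NormedAddCommGroup F] [NormedSpace ℝ F] {f : X → F} (hf : Integrable f μ)
    (hf0 : ∫ y, f y ∂μ = 0) (k : X → ℝ) (c : ℝ) :
    ‖∫ y, k y • f y ∂μ‖ₑ ≤ ∫⁻ y, ‖(k y - c) • f y‖ₑ ∂μ := by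
  by_cases hkf : Integrable (fun y => k y • f y) μ
  · have cancel : ∫ y, k y • f y ∂μ = ∫ y, (k y - c) • f y ∂μ := by
      simp only [sub_smul]
      rw [integral_sub hkf (hf.fun_smul c), integral_smul, hf0, smul_zero, sub_zero]
    rw [cancel]
    exact enorm_integral_le_lintegral_enorm _
  · rw [integral_undef hkf, enorm_zero]
    exact zero_le

variable {E F : Type*} [NormedAddCommGroup E] [NormedSpace ℝ E] [NormedAddCommGroup F]
  [NormedSpace ℝ F] {K : E → ℝ} {s C α β : ℝ}

namespace IsSingularKernel

lemma enorm_rpow_norm_mul_enorm_sub_smul_le (hK : IsSingularKernel K s C) (hs : 0 ≤ s)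
    (hβ : 0 ≤ β) (hβα : β ≤ α) (hα : α ≤ 1) {x y : E} (hx : 1 ≤ ‖x‖) (hyx : y ≠ x) (v : F) :
    ‖‖x‖ ^ β‖ₑ * ‖(K (x - y) - K x) • v‖ₑ ≤ ENNReal.ofReal (6 * 2 ^ s * C) *
      (‖twoScalePower s (α - β) x‖ₑ * ‖‖y‖ ^ α * ‖v‖‖ₑ +
        ‖‖y‖ ^ α * ‖v‖‖ₑ * ‖twoScalePower s (α - β) (-y + x)‖ₑ) := by
  set Φ : E → ℝ := twoScalePower s (α - β)
  have hΦ (z : E) : 0 ≤ Φ z := twoScalePower_nonneg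
  have hC := hK.constant_nonneg (norm_pos_iff.1 (by linarith) : x ≠ 0)
  rw [← enorm_norm (_ • v), norm_smul, ← enorm_mul, ← enorm_mul, ← enorm_mul,
    Real.enorm_of_nonneg (by positivity), Real.enorm_of_nonneg (mul_nonneg (hΦ _) (by positivity)),
    Real.enorm_of_nonneg (mul_nonneg (by positivity) (hΦ _)),
    ← ENNReal.ofReal_add (mul_nonneg (hΦ _) (by positivity)) (mul_nonneg (by positivity) (hΦ _)),
    ← ENNReal.ofReal_mul (by positivity)]
  refine ENNReal.ofReal_le_ofReal ?_
  calc ‖x‖ ^ β * (‖K (x - y) - K x‖ * ‖v‖) = ‖x‖ ^ β * ‖K (x - y) - K x‖ * ‖v‖ := by ring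
    _ ≤ 6 * 2 ^ s * C * (‖y‖ ^ α * (Φ x + Φ (x - y))) * ‖v‖ := by
        grw [hK.rpow_norm_mul_norm_sub_le hs hβ hβα hα hx hyx]
    _ = 6 * 2 ^ s * C * (Φ x * (‖y‖ ^ α * ‖v‖) + ‖y‖ ^ α * ‖v‖ * Φ (-y + x)) := by
        rw [neg_add_eq_sub]
        ring

end IsSingularKernel

variable [FiniteDimensional ℝ E] [MeasurableSpace E] [BorelSpace E] {μ : Measure E}
  [μ.IsAddHaarMeasure] {f : E → F} {p q r : ℝ}

namespace IsSingularKernel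

lemma enorm_rpow_norm_mul_norm_integral_le (hK : IsSingularKernel K s C) (hs : 0 ≤ s)
    (hβ : 0 ≤ β) (hβα : β ≤ α) (hα : α ≤ 1) (hf : Integrable f μ) (hf0 : ∫ y, f y ∂μ = 0) {x : E}
    (hx : 1 ≤ ‖x‖) :
    ‖‖x‖ ^ β * ‖∫ y, K (x - y) • f y ∂μ‖‖ₑ ≤ ENNReal.ofReal (6 * 2 ^ s * C) *
      (‖twoScalePower s (α - β) x‖ₑ * ∫⁻ y, ‖‖y‖ ^ α * ‖f y‖‖ₑ ∂μ +
        ((fun y => ‖‖y‖ ^ α * ‖f y‖‖ₑ) ⋆ₗ[μ] fun y => ‖twoScalePower s (α - β) y‖ₑ) x) := by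
  have : Nontrivial E := ⟨x, 0, norm_pos_iff.1 (by linarith)⟩
  have hw : AEMeasurable (fun y => ‖‖y‖ ^ α * ‖f y‖‖ₑ) μ := by
    have := hf.aestronglyMeasurable.norm.aemeasurable
    fun_prop
  calc ‖‖x‖ ^ β * ‖∫ y, K (x - y) • f y ∂μ‖‖ₑ
      ≤ ‖‖x‖ ^ β‖ₑ * ∫⁻ y, ‖(K (x - y) - K x) • f y‖ₑ ∂μ := by
        rw [enorm_mul, enorm_norm]
        gcongr
        exact enorm_integral_smul_le_lintegral_enorm_sub hf hf0 (fun y => K (x - y)) (K x)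
    _ = ∫⁻ y, ‖‖x‖ ^ β‖ₑ * ‖(K (x - y) - K x) • f y‖ₑ ∂μ :=
        (lintegral_const_mul' _ _ enorm_ne_top).symm
    _ ≤ ∫⁻ y, ENNReal.ofReal (6 * 2 ^ s * C) *
          (‖twoScalePower s (α - β) x‖ₑ * ‖‖y‖ ^ α * ‖f y‖‖ₑ +
            ‖‖y‖ ^ α * ‖f y‖‖ₑ * ‖twoScalePower s (α - β) (-y + x)‖ₑ) ∂μ :=
        lintegral_mono_ae <| (Measure.ae_ne μ x).mono fun y hyx =>
          hK.enorm_rpow_norm_mul_enorm_sub_smul_le hs hβ hβα hα hx hyx (f y)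
    _ = _ := by
        rw [lintegral_const_mul' _ _ ENNReal.ofReal_ne_top,
          lintegral_add_left' (hw.const_mul _), lintegral_const_mul'' _ hw, lconvolution_def]

theorem eLpNorm_rpow_norm_mul_norm_integral_le (hK : IsSingularKernel K s C) (hs : 0 ≤ s)
    (hβ : 0 ≤ β) (hβα : β ≤ α) (hα : α ≤ 1) (hp : 1 ≤ p) (hq : 1 ≤ q) (hr : 1 ≤ r)
    (hprq : p⁻¹ + r⁻¹ = 1 + q⁻¹) (hf : Integrable f μ) (hf0 : ∫ y, f y ∂μ = 0) :
    eLpNorm (fun x => ‖x‖ ^ β * ‖∫ y, K (x - y) • f y ∂μ‖) (ENNReal.ofReal q)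
        (μ.restrict (ball 0 1)ᶜ) ≤
      ENNReal.ofReal (6 * 2 ^ s * C) *
        (eLpNorm (fun y => ‖y‖ ^ α * ‖f y‖) (ENNReal.ofReal p) μ *
            eLpNorm (twoScalePower s (α - β)) (ENNReal.ofReal r) (μ.restrict (ball (0 : E) 1)) +
          2 * (eLpNorm (fun y => ‖y‖ ^ α * ‖f y‖) 1 μ *
            eLpNorm (twoScalePower s (α - β)) (ENNReal.ofReal q)
              (μ.restrict (ball (0 : E) 1)ᶜ))) := by
  set Φ : E → ℝ := twoScalePower s (α - β)
  set w : E → ℝ := fun y => ‖y‖ ^ α * ‖f y‖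
  have hΦ : AEMeasurable (fun y => ‖Φ y‖ₑ) μ :=
    measurable_twoScalePower.enorm.aemeasurable
  have hw : AEMeasurable (fun y => ‖w y‖ₑ) μ := by
    have := hf.aestronglyMeasurable.norm.aemeasurable
    fun_prop
  have pointwise : ∀ᵐ x ∂μ.restrict (ball 0 1)ᶜ, ‖‖x‖ ^ β * ‖∫ y, K (x - y) • f y ∂μ‖‖ₑ ≤
      (6 * 2 ^ s * C).toNNReal * ‖((fun x => ‖Φ x‖ₑ * ∫⁻ y, ‖w y‖ₑ ∂μ) +
        (fun y => ‖w y‖ₑ) ⋆ₗ[μ] fun y => ‖Φ y‖ₑ) x‖ₑ :=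
    ae_restrict_of_forall_mem measurableSet_ball.compl fun x hx =>
      hK.enorm_rpow_norm_mul_norm_integral_le hs hβ hβα hα hf hf0 (by simpa using hx)
  have far : eLpNorm (fun x => ‖Φ x‖ₑ * ∫⁻ y, ‖w y‖ₑ ∂μ) (ENNReal.ofReal q)
      (μ.restrict (ball 0 1)ᶜ) =
        eLpNorm w 1 μ * eLpNorm Φ (ENNReal.ofReal q) (μ.restrict (ball 0 1)ᶜ) := by
    rw [eLpNorm_mul_const_ennreal hΦ.restrict _ (by linarith), eLpNorm_enorm,
      eLpNorm_one_eq_lintegral_enorm, mul_comm]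
  have young := eLpNorm_lconvolution_le_add (S := ball 0 1) measurableSet_ball hw hΦ hp hr hq hprq
  simp only [eLpNorm_enorm] at young
  grw [eLpNorm_le_nnreal_smul_eLpNorm_of_ae_le_mul' pointwise, eLpNorm_add_le
    (hΦ.mul_const _).aestronglyMeasurable.restrict
    (aemeasurable_lconvolution hw hΦ).aestronglyMeasurable.restrict (by simpa using hq), far,
    eLpNorm_restrict_le (_ ⋆ₗ[μ] _), young, ENNReal.smul_def, smul_eq_mul, two_mul, add_left_comm]
  rfl

end IsSingularKernel

theorem weighted_L2_convolution_estimate_general [CompleteSpace F] {C₀ : ℝ} (hs : 0 ≤ s)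
    (hβ : 0 ≤ β) (hβα : β ≤ α) (hα : α ≤ 1) (hp : 1 ≤ p) (hpq : p ≤ q)
    (h_near : s < Module.finrank ℝ E * (1 + q⁻¹ - p⁻¹))
    (h_far : Module.finrank ℝ E < q * (s + (α - β))) :
    ∃ C : ℝ, 0 < C ∧ ∀ K : E → ℝ, IsSingularKernel K s C₀ →
      ∀ f : E → F, Integrable f μ → (∫ y, f y ∂μ) = 0 →
        eLpNorm (fun x => ‖x‖ ^ β * ‖∫ y, K (x - y) • f y ∂μ‖) (ENNReal.ofReal q)
            (μ.restrict (ball 0 1)ᶜ) ≤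
          ENNReal.ofReal C * (eLpNorm (fun y => ‖y‖ ^ α * ‖f y‖) (ENNReal.ofReal p) μ +
            eLpNorm (fun y => ‖y‖ ^ α * ‖f y‖) 1 μ) := by
  have hq : 1 ≤ q := hp.trans hpq
  have hq0 : 0 < q⁻¹ := by positivity
  have hqp : q⁻¹ ≤ p⁻¹ := by gcongr
  have hr0 : 0 < 1 + q⁻¹ - p⁻¹ := by linarith [inv_le_one_of_one_le₀ hp]
  set r := (1 + q⁻¹ - p⁻¹)⁻¹ with hr_def
  have hr : 1 ≤ r := (one_le_inv₀ hr0).2 (by linarith)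
  have near := memLp_twoScalePower_ball (μ := μ) (γ := α - β) (q := r) hs (by positivity)
    ((inv_mul_lt_iff₀' hr0).2 h_near)
  have far := memLp_twoScalePower_compl_ball (μ := μ) (by positivity) h_far
  set A := eLpNorm (twoScalePower s (α - β)) (ENNReal.ofReal r) (μ.restrict (ball (0 : E) 1))
  set B := eLpNorm (twoScalePower s (α - β)) (ENNReal.ofReal q) (μ.restrict (ball (0 : E) 1)ᶜ)
  set M := ENNReal.ofReal (6 * 2 ^ s * C₀) * (A + 2 * B)
  have hM : M ≠ ⊤ := by
    have := near.eLpNorm_ne_top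
    have := far.eLpNorm_ne_top
    finiteness
  refine ⟨M.toReal + 1, by positivity, fun K hK f hf hf0 => ?_⟩
  set Wp := eLpNorm (fun y => ‖y‖ ^ α * ‖f y‖) (ENNReal.ofReal p) μ
  set W1 := eLpNorm (fun y => ‖y‖ ^ α * ‖f y‖) 1 μ
  calc _ ≤ ENNReal.ofReal (6 * 2 ^ s * C₀) * (Wp * A + 2 * (W1 * B)) :=
        hK.eLpNorm_rpow_norm_mul_norm_integral_le hs hβ hβα hα hp hq hr
          (by rw [hr_def, inv_inv]; ring) hf hf0
    _ ≤ ENNReal.ofReal (6 * 2 ^ s * C₀) * ((Wp + W1) * (A + 2 * B)) := by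
        gcongr
        rw [add_mul, mul_left_comm]
        gcongr
        · exact le_self_add
        · exact le_add_self
    _ = M * (Wp + W1) := by rw [mul_comm (Wp + W1), ← mul_assoc]
    _ ≤ ENNReal.ofReal (M.toReal + 1) * (Wp + W1) := by
        gcongr
        exact ENNReal.le_ofReal_iff_toReal_le hM (by positivity) |>.2 (by linarith)

end WeightedConvolution

/-- Weighted L² estimate (key2) of the paper for the "bad" part K ∗ f of the gradient of
the velocity, outside the unit ball, under the cancellation condition ∫ f = 0. -/
theorem weighted_L2_convolution_estimate (C₀ : ℝ) (hC₀ : 0 < C₀) (α β : ℝ)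
    (hβ : 0 < β) (hβα : β < α) (hα : α ≤ 1) :
    ∃ C : ℝ, 0 < C ∧ ∀ K : E2 → ℝ,
      ContDiffOn ℝ 1 K {(0 : E2)}ᶜ →
      (∀ x : E2, x ≠ 0 → |K x| ≤ C₀ * ‖x‖ ^ (-1 : ℝ)) →
      (∀ x : E2, x ≠ 0 → ‖fderiv ℝ K x‖ ≤ C₀ * ‖x‖ ^ (-2 : ℝ)) →
      ∀ f : E2 → E2, Integrable f → Integrable (fun y => ‖f y‖ ^ 2) →
        (∫ y : E2, f y) = 0 →
        eLpNorm (fun x => ‖x‖ ^ β * ‖∫ y : E2, K (x - y) • f y‖) 2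
            (volume.restrict (ball (0 : E2) 1)ᶜ) ≤
          ENNReal.ofReal C *
            (eLpNorm (fun y => ‖y‖ ^ α * ‖f y‖) (ENNReal.ofReal (4 / (4 - α + β))) volume +
             eLpNorm (fun y => ‖y‖ ^ α * ‖f y‖) 1 volume) := by
  have hαβ : 0 < 4 - α + β := by linarith
  obtain ⟨C, hC, bound⟩ := weighted_L2_convolution_estimate_general (E := E2) (F := E2)
    (μ := volume) (C₀ := C₀) (s := 1) (p := 4 / (4 - α + β)) (q := 2) zero_le_one hβ.le hβα.le hα
    (by rw [le_div_iff₀ hαβ]; linarith) (by rw [div_le_iff₀ hαβ]; linarith)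
    (by rw [finrank_euclideanSpace_fin, inv_div]; push_cast; linarith)
    (by rw [finrank_euclideanSpace_fin]; push_cast; linarith)
  refine ⟨C, hC, fun K hK hK₀ hK₁ f hf _ hf0 => ?_⟩
  have kernel : IsSingularKernel K 1 C₀ :=
    ⟨hK.differentiableOn one_ne_zero, hK₀, by rwa [show -(1 + 1 : ℝ) = -2 by norm_num]⟩
  simpa only [ENNReal.ofReal_ofNat] using bound K kernel f hf hf0
end
end

section
/- (Persistence of mass near the origin for a short time.) Let N ≥ 1, M > 0 and T > 0. Let u : ℝ²×[0,T] → ℝ² be continuously differentiable, and let ρ ∈ C¹(ℝ²×[0,T]) be nonnegative with spatial support contained in a fixed compact set for all t, satisfying the continuity equation ρ_t + div(ρu) = 0 pointwise on ℝ²×[0,T]. Assume that ∫_{B_N} ρ(x,0) dx ≥ 1/2 and that sup_{0≤t≤T} ∫_{ℝ²} ρ|u|²(x,t) dx ≤ M. Then there exists a positive time T₁ depending only on M, N and ‖ρ(·,0)‖_{L¹(ℝ²)} such that for all 0 ≤ t ≤ min(T, T₁), ∫_{B_{2N}} ρ(x,t) dx ≥ 1/4. -/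
/-!
Test the continuity equation against a smooth cutoff `φ` with `φ = 1` on the small ball and `φ = 0`
off the large one. Integration by parts gives `d/dt ∫ φ ρ = ∫ ρ Dφ(u)`. For `φ = 1` this is
conservation of mass; for the cutoff, `|Dφ(u)| ≤ C (1 + ‖u‖²) / 2` bounds the rate by
`C (mass + energy) / 2`. Hence `∫ φ ρ`, which lies between the masses of the two balls, can drop by
a given amount only after a time controlled by the mass and the energy.
-/

open MeasureTheory Real Set Metric

noncomputable section

/-- The i-th standard basis vector of ℝ². -/
def e2 (i : Fin 2) : E2 := EuclideanSpace.single i (1 : ℝ)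

/-- Divergence of a vector field on ℝ²: div u = ∂₁u¹ + ∂₂u². -/
def div2 (u : E2 → E2) (x : E2) : ℝ := ∑ i, fderiv ℝ u x (e2 i) i

section Calculus

variable {E F : Type*} [NormedAddCommGroup E] [NormedSpace ℝ E] [NormedAddCommGroup F]
  [NormedSpace ℝ F]

/-- The divergence of a vector field, defined without coordinates as the trace of its derivative.
It is `0` wherever the field is not differentiable. -/
def divergence (V : E → E) (x : E) : ℝ :=
  LinearMap.trace ℝ E (fderiv ℝ V x)

lemma div2_eq_divergence : div2 = divergence := by
  ext V x
  simp [div2, e2, divergence, PiLp.inner_apply,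
    LinearMap.trace_eq_sum_inner _ (EuclideanSpace.basisFun (Fin 2) ℝ)]

lemma divergence_eq_zero_of_notMem_tsupport {V : E → E} {x : E} (hx : x ∉ tsupport V) :
    divergence V x = 0 := by
  simp [divergence, fderiv_of_notMem_tsupport ℝ hx]

lemma divergence_smul [FiniteDimensional ℝ E] {φ : E → ℝ} {V : E → E} {x : E}
    (hφ : DifferentiableAt ℝ φ x) (hV : DifferentiableAt ℝ V x) :
    divergence (fun y => φ y • V y) x = φ x * divergence V x + fderiv ℝ φ x (V x) := by
  simp [divergence, fderiv_fun_smul hφ hV]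

variable [MeasurableSpace E] [BorelSpace E] {μ : Measure E}

lemma integrable_fderiv_of_hasCompactSupport [IsFiniteMeasureOnCompacts μ] {V : E → F}
    (hV : ContDiff ℝ 1 V) (hc : HasCompactSupport V) : Integrable (fderiv ℝ V) μ :=
  (hV.continuous_fderiv one_ne_zero).integrable_of_hasCompactSupport (hc.fderiv ℝ)

lemma hasDerivAt_setIntegral_of_contDiff [IsFiniteMeasureOnCompacts μ] {G : ℝ → E → F}
    (hG : ContDiff ℝ 1 fun q : ℝ × E => G q.1 q.2) {K : Set E} (hK : IsCompact K) (t : ℝ) :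
    HasDerivAt (fun s => ∫ x in K, G s x ∂μ) (∫ x in K, deriv (fun s => G s x) t ∂μ) t := by
  have hderiv (s : ℝ) (x : E) : HasDerivAt (fun r => G r x)
      (fderiv ℝ (fun q : ℝ × E => G q.1 q.2) (s, x) (1, 0)) s :=
    (hG.differentiable one_ne_zero (s, x)).hasFDerivAt.comp_hasDerivAt (f := fun r => (r, x)) s
      ((hasDerivAt_id s).prodMk (hasDerivAt_const s x))
  have hderiv_cont : Continuous fun q : ℝ × E => deriv (fun s => G s q.2) q.1 := by
    simp only [(hderiv _ _).deriv]
    exact (hG.continuous_fderiv one_ne_zero).clm_apply continuous_const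
  have hslice (s : ℝ) : ContinuousOn (G s) K :=
    (hG.continuous.comp (Continuous.prodMk_right s)).continuousOn
  have hderiv_slice : ContinuousOn (fun x => deriv (fun s => G s x) t) K :=
    (hderiv_cont.comp (Continuous.prodMk_right t)).continuousOn
  obtain ⟨C, hC⟩ := ((isCompact_closedBall t 1).prod hK).exists_bound_of_continuousOn
    hderiv_cont.continuousOn
  refine (hasDerivAt_integral_of_dominated_loc_of_deriv_le (bound := fun _ => C)
    (F' := fun s x => deriv (fun r => G r x) s) (closedBall_mem_nhds t one_pos)
    (.of_forall fun s => (hslice s).aestronglyMeasurable_of_isCompact hK hK.measurableSet)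
    ((hslice t).integrableOn_compact hK)
    (hderiv_slice.aestronglyMeasurable_of_isCompact hK hK.measurableSet) ?_
    (continuousOn_const.integrableOn_compact hK)
    (.of_forall fun x s _ => (hderiv s x).differentiableAt.hasDerivAt)).2
  filter_upwards [ae_restrict_mem hK.measurableSet] with x hx s hs using hC (s, x) ⟨hs, hx⟩

variable [FiniteDimensional ℝ E]

variable (E) in
/-- The trace as a continuous functional of an endomorphism, so that it commutes with integrals. -/
def traceCLM : (E →L[ℝ] E) →L[ℝ] ℝ :=
  (LinearMap.trace ℝ E ∘ₗ ContinuousLinearMap.coeLM ℝ).toContinuousLinearMap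

lemma integrable_divergence_of_hasCompactSupport [IsFiniteMeasureOnCompacts μ] {V : E → E}
    (hV : ContDiff ℝ 1 V) (hc : HasCompactSupport V) : Integrable (divergence V) μ :=
  (traceCLM E).integrable_comp (integrable_fderiv_of_hasCompactSupport hV hc)

variable [μ.IsAddHaarMeasure]

lemma integral_fderiv_eq_zero {V : E → F} (hV : ContDiff ℝ 1 V) (hc : HasCompactSupport V) :
    ∫ x, fderiv ℝ V x ∂μ = 0 := by
  have hint : Integrable (fderiv ℝ V) μ := integrable_fderiv_of_hasCompactSupport hV hc
  ext v
  rw [ContinuousLinearMap.integral_apply hint]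
  simpa using integral_smul_fderiv_eq_neg_fderiv_smul_of_integrable (μ := μ)
    (f := fun _ : E => (1 : ℝ)) (g := V) (v := v) (by simp)
    (by simpa using hint.apply_continuousLinearMap v)
    (by simpa using hV.continuous.integrable_of_hasCompactSupport hc)
    (fun _ _ => differentiableAt_const _) (fun x _ => hV.differentiable one_ne_zero x)

lemma integral_divergence_eq_zero {V : E → E} (hV : ContDiff ℝ 1 V) (hc : HasCompactSupport V) :
    ∫ x, divergence V x ∂μ = 0 :=
  calc ∫ x, divergence V x ∂μ = traceCLM E (∫ x, fderiv ℝ V x ∂μ) :=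
        (traceCLM E).integral_comp_comm (integrable_fderiv_of_hasCompactSupport hV hc)
    _ = 0 := by rw [integral_fderiv_eq_zero hV hc, map_zero]

lemma integral_mul_divergence_eq_neg {φ : E → ℝ} {V : E → E} (hφ : ContDiff ℝ 1 φ)
    (hV : ContDiff ℝ 1 V) (hc : HasCompactSupport V) :
    ∫ x, φ x * divergence V x ∂μ = -∫ x, fderiv ℝ φ x (V x) ∂μ := by
  have hφV : ContDiff ℝ 1 fun x => φ x • V x := hφ.smul hV
  have hφVc : HasCompactSupport fun x => φ x • V x := hc.smul_left
  have hflux : Integrable (fun x => fderiv ℝ φ x (V x)) μ := by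
    refine ((hφ.continuous_fderiv one_ne_zero).clm_apply
      hV.continuous).integrable_of_hasCompactSupport (hc.mono fun x hx hVx => hx ?_)
    simp only [hVx, map_zero]
  calc ∫ x, φ x * divergence V x ∂μ
      = ∫ x, (divergence (fun y => φ y • V y) x - fderiv ℝ φ x (V x)) ∂μ := by
        simp only [divergence_smul (hφ.differentiable one_ne_zero _)
          (hV.differentiable one_ne_zero _), add_sub_cancel_right]
    _ = -∫ x, fderiv ℝ φ x (V x) ∂μ := by
        rw [integral_sub (integrable_divergence_of_hasCompactSupport hφV hφVc) hflux,
          integral_divergence_eq_zero hφV hφVc, zero_sub]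

end Calculus

section WeightedIntegrals

variable {α : Type*} [MeasurableSpace α] {μ : Measure α} {s : Set α} {φ ρ : α → ℝ}

lemma setIntegral_le_integral_mul (hs : MeasurableSet s) (hφ : ∀ x, 0 ≤ φ x)
    (hφs : ∀ x ∈ s, φ x = 1) (hρ : ∀ x, 0 ≤ ρ x) (hint : Integrable (fun x => φ x * ρ x) μ) :
    ∫ x in s, ρ x ∂μ ≤ ∫ x, φ x * ρ x ∂μ :=
  calc ∫ x in s, ρ x ∂μ = ∫ x in s, φ x * ρ x ∂μ :=
        setIntegral_congr_fun hs fun x hx => by simp only [hφs x hx, one_mul]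
    _ ≤ ∫ x, φ x * ρ x ∂μ :=
        setIntegral_le_integral hint (.of_forall fun x => mul_nonneg (hφ x) (hρ x))

lemma integral_mul_le_setIntegral (hφ : ∀ x, φ x ≤ 1) (hφs : ∀ x ∉ s, φ x = 0)
    (hρ : ∀ x, 0 ≤ ρ x) (hρint : Integrable ρ μ) (hint : Integrable (fun x => φ x * ρ x) μ) :
    ∫ x, φ x * ρ x ∂μ ≤ ∫ x in s, ρ x ∂μ :=
  calc ∫ x, φ x * ρ x ∂μ = ∫ x in s, φ x * ρ x ∂μ :=
        (setIntegral_eq_integral_of_forall_compl_eq_zero fun x hx => by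
          simp only [hφs x hx, zero_mul]).symm
    _ ≤ ∫ x in s, ρ x ∂μ :=
        integral_mono hint.integrableOn hρint.integrableOn fun x =>
          mul_le_of_le_one_left (hρ x) (hφ x)

lemma norm_integral_mul_clm_apply_le {E : Type*} [NormedAddCommGroup E] [NormedSpace ℝ E]
    {A : α → E →L[ℝ] ℝ} {v : α → E} {C : ℝ} (hA : ∀ x, ‖A x‖ ≤ C) (hρ : ∀ x, 0 ≤ ρ x)
    (hmass : Integrable ρ μ) (henergy : Integrable (fun x => ρ x * ‖v x‖ ^ 2) μ) :
    ‖∫ x, ρ x * A x (v x) ∂μ‖ ≤ C * ((∫ x, ρ x ∂μ + ∫ x, ρ x * ‖v x‖ ^ 2 ∂μ) / 2) := by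
  have hpointwise (x : α) :
      ‖ρ x * A x (v x)‖ ≤ C * ((ρ x + ρ x * ‖v x‖ ^ 2) / 2) := by
    have hC : 0 ≤ C := (norm_nonneg _).trans (hA x)
    calc ‖ρ x * A x (v x)‖ = ρ x * ‖A x (v x)‖ := by rw [norm_mul, norm_of_nonneg (hρ x)]
      _ ≤ ρ x * (C * ‖v x‖) :=
          mul_le_mul_of_nonneg_left ((A x).le_of_opNorm_le (hA x) (v x)) (hρ x)
      _ ≤ ρ x * (C * ((1 + ‖v x‖ ^ 2) / 2)) := by
          gcongr
          · exact hρ x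
          · linarith [sq_nonneg (‖v x‖ - 1)]
      _ = C * ((ρ x + ρ x * ‖v x‖ ^ 2) / 2) := by ring
  calc ‖∫ x, ρ x * A x (v x) ∂μ‖ ≤ ∫ x, C * ((ρ x + ρ x * ‖v x‖ ^ 2) / 2) ∂μ :=
        norm_integral_le_of_norm_le (((hmass.add henergy).div_const 2).const_mul C)
          (.of_forall hpointwise)
    _ = C * ((∫ x, ρ x ∂μ + ∫ x, ρ x * ‖v x‖ ^ 2 ∂μ) / 2) := by
        rw [integral_const_mul, integral_div, integral_add hmass henergy]

end WeightedIntegrals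

section ContinuityEquation

variable {E : Type*} [NormedAddCommGroup E] [NormedSpace ℝ E]

/-- `ρ` and `u` are a classical solution of the continuity equation `∂ₜρ + div (ρ u) = 0` at the
times in `I`, with a density vanishing off a compact set that does not depend on the time.
The density is assumed to be `C¹` at all times, so that `∂ₜρ` is a two-sided derivative even at the
endpoints of an interval `I`. -/
structure IsContinuityEquationSolution (I : Set ℝ) (u : ℝ → E → E) (ρ : ℝ → E → ℝ) : Prop where
  contDiff_density : ContDiff ℝ 1 fun q : ℝ × E => ρ q.1 q.2
  contDiff_velocity : ∀ t ∈ I, ContDiff ℝ 1 (u t)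
  exists_isCompact : ∃ K : Set E, IsCompact K ∧ ∀ t ∈ I, ∀ x ∉ K, ρ t x = 0
  deriv_add_divergence : ∀ t ∈ I, ∀ x,
    deriv (fun s => ρ s x) t + divergence (fun y => ρ t y • u t y) x = 0

namespace IsContinuityEquationSolution

variable {I : Set ℝ} {u : ℝ → E → E} {ρ : ℝ → E → ℝ} {t₀ t : ℝ}

lemma contDiff_slice (h : IsContinuityEquationSolution I u ρ) (t : ℝ) : ContDiff ℝ 1 (ρ t) :=
  h.contDiff_density.comp (contDiff_prodMk_right t)

lemma hasCompactSupport (h : IsContinuityEquationSolution I u ρ) (ht : t ∈ I) :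
    HasCompactSupport (ρ t) :=
  have ⟨_, hK, hρK⟩ := h.exists_isCompact
  .intro hK (hρK t ht)

variable [MeasurableSpace E] [BorelSpace E] {μ : Measure E}

lemma integrable_mul [IsFiniteMeasureOnCompacts μ] (h : IsContinuityEquationSolution I u ρ)
    (ht : t ∈ I) {φ : E → ℝ} (hφ : Continuous φ) : Integrable (fun x => φ x * ρ t x) μ :=
  (hφ.mul (h.contDiff_slice t).continuous).integrable_of_hasCompactSupport
    (h.hasCompactSupport ht).mul_left

lemma integrable [IsFiniteMeasureOnCompacts μ] (h : IsContinuityEquationSolution I u ρ)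
    (ht : t ∈ I) : Integrable (ρ t) μ :=
  (h.contDiff_slice t).continuous.integrable_of_hasCompactSupport (h.hasCompactSupport ht)

variable [FiniteDimensional ℝ E] [μ.IsAddHaarMeasure]

lemma integral_mul_deriv (h : IsContinuityEquationSolution I u ρ) (ht : t ∈ I) {φ : E → ℝ}
    (hφ : ContDiff ℝ 1 φ) :
    ∫ x, φ x * deriv (fun s => ρ s x) t ∂μ = ∫ x, ρ t x * fderiv ℝ φ x (u t x) ∂μ := by
  have hmomentum : ContDiff ℝ 1 fun x => ρ t x • u t x :=
    (h.contDiff_slice t).smul (h.contDiff_velocity t ht)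
  calc ∫ x, φ x * deriv (fun s => ρ s x) t ∂μ
      = -∫ x, φ x * divergence (fun y => ρ t y • u t y) x ∂μ := by
        simp only [eq_neg_of_add_eq_zero_left (h.deriv_add_divergence t ht _), mul_neg,
          integral_neg]
    _ = ∫ x, ρ t x * fderiv ℝ φ x (u t x) ∂μ := by
        rw [integral_mul_divergence_eq_neg hφ hmomentum (h.hasCompactSupport ht).smul_right,
          neg_neg]
        simp only [map_smul, smul_eq_mul]

lemma hasDerivWithinAt_integral_mul (h : IsContinuityEquationSolution I u ρ) (ht : t ∈ I)
    {φ : E → ℝ} (hφ : ContDiff ℝ 1 φ) :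
    HasDerivWithinAt (fun s => ∫ x, φ x * ρ s x ∂μ)
      (∫ x, ρ t x * fderiv ℝ φ x (u t x) ∂μ) I t := by
  obtain ⟨K, hK, hρK⟩ := h.exists_isCompact
  have hsetIntegral (s : ℝ) (hs : s ∈ I) : ∫ x, φ x * ρ s x ∂μ = ∫ x in K, φ x * ρ s x ∂μ :=
    (setIntegral_eq_integral_of_forall_compl_eq_zero fun x hx => by
      simp only [hρK s hs x hx, mul_zero]).symm
  have hderiv_off (x : E) (hx : x ∉ K) : deriv (fun s => ρ s x) t = 0 := by
    have htsupport : tsupport (fun y => ρ t y • u t y) ⊆ K :=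
      closure_minimal (Function.support_subset_iff'.2 fun y hy => by
        simp only [hρK t ht y hy, zero_smul]) hK.isClosed
    simpa only [divergence_eq_zero_of_notMem_tsupport (notMem_subset htsupport hx), add_zero]
      using h.deriv_add_divergence t ht x
  have hderivK := hasDerivAt_setIntegral_of_contDiff (μ := μ) (G := fun s x => φ x * ρ s x)
    ((hφ.comp contDiff_snd).mul h.contDiff_density) hK t
  simp only [deriv_const_mul_field] at hderivK
  rw [setIntegral_eq_integral_of_forall_compl_eq_zero fun x hx => by
    rw [hderiv_off x hx, mul_zero], h.integral_mul_deriv ht hφ] at hderivK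
  exact hderivK.hasDerivWithinAt.congr hsetIntegral (hsetIntegral t ht)

lemma integral_eq_integral (h : IsContinuityEquationSolution I u ρ) (hI : Convex ℝ I)
    (ht₀ : t₀ ∈ I) (ht : t ∈ I) : ∫ x, ρ t x ∂μ = ∫ x, ρ t₀ x ∂μ := by
  have hderiv (s : ℝ) (hs : s ∈ I) : HasDerivWithinAt (fun s => ∫ x, ρ s x ∂μ) 0 I s := by
    simpa using h.hasDerivWithinAt_integral_mul (μ := μ) hs (contDiff_const (c := (1 : ℝ)))
  have hle := hI.norm_image_sub_le_of_norm_hasDerivWithin_le hderiv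
    (fun _ _ => norm_zero.le) ht₀ ht
  rwa [zero_mul, norm_le_zero_iff, sub_eq_zero] at hle

lemma norm_integral_mul_sub_le (h : IsContinuityEquationSolution I u ρ) (hI : Convex ℝ I)
    (hρ : ∀ t ∈ I, ∀ x, 0 ≤ ρ t x) {M : ℝ} (hM : ∀ t ∈ I, ∫ x, ρ t x * ‖u t x‖ ^ 2 ∂μ ≤ M)
    {φ : E → ℝ} (hφ : ContDiff ℝ 1 φ) {C : ℝ} (hC : ∀ x, ‖fderiv ℝ φ x‖ ≤ C)
    (ht₀ : t₀ ∈ I) (ht : t ∈ I) :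
    ‖∫ x, φ x * ρ t x ∂μ - ∫ x, φ x * ρ t₀ x ∂μ‖ ≤
      C * ((∫ x, ρ t₀ x ∂μ + M) / 2) * ‖t - t₀‖ := by
  have hC0 : 0 ≤ C := (norm_nonneg _).trans (hC 0)
  refine hI.norm_image_sub_le_of_norm_hasDerivWithin_le
    (fun s hs => h.hasDerivWithinAt_integral_mul hs hφ) (fun s hs => ?_) ht₀ ht
  have henergy : Integrable (fun x => ρ s x * ‖u s x‖ ^ 2) μ := by
    simpa only [mul_comm, Pi.pow_apply] using
      h.integrable_mul hs ((h.contDiff_velocity s hs).continuous.norm.pow 2)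
  calc ‖∫ x, ρ s x * fderiv ℝ φ x (u s x) ∂μ‖
      ≤ C * ((∫ x, ρ s x ∂μ + ∫ x, ρ s x * ‖u s x‖ ^ 2 ∂μ) / 2) :=
        norm_integral_mul_clm_apply_le hC (hρ s hs) (h.integrable hs) henergy
    _ ≤ C * ((∫ x, ρ t₀ x ∂μ + M) / 2) := by
        rw [h.integral_eq_integral hI ht₀ hs]
        gcongr
        exact hM s hs

end IsContinuityEquationSolution

theorem mass_persistence_general [FiniteDimensional ℝ E] [MeasurableSpace E] [BorelSpace E]
    (μ : Measure E) [μ.IsAddHaarMeasure] (c : E) {r R : ℝ} (hr : 0 < r) (hrR : r < R)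
    {m m' : ℝ} (hm : m' < m) (M L : ℝ) :
    ∃ T₁ : ℝ, 0 < T₁ ∧ ∀ (T : ℝ) (u : ℝ → E → E) (ρ : ℝ → E → ℝ),
      IsContinuityEquationSolution (Icc 0 T) u ρ →
      (∀ t ∈ Icc 0 T, ∀ x, 0 ≤ ρ t x) →
      m ≤ ∫ x in ball c r, ρ 0 x ∂μ →
      (∀ t ∈ Icc 0 T, ∫ x, ρ t x * ‖u t x‖ ^ 2 ∂μ ≤ M) →
      ∫ x, ρ 0 x ∂μ = L →
      ∀ t ∈ Icc 0 (min T T₁), m' ≤ ∫ x in ball c R, ρ t x ∂μ := by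
  let φ : ContDiffBump c := ⟨r, R, hr, hrR⟩
  have hφ : ContDiff ℝ 1 φ := φ.contDiff
  obtain ⟨C, hC⟩ := (hφ.continuous_fderiv one_ne_zero).bounded_above_of_compact_support
    (φ.hasCompactSupport.fderiv ℝ)
  obtain ⟨T₁, hT₁, hdrop⟩ := exists_pos_mul_lt (sub_pos.2 hm) |C * ((L + M) / 2)|
  refine ⟨T₁, hT₁, fun T u ρ h hρ hmass henergy hL t ht => ?_⟩
  have htT : t ∈ Icc 0 T := ⟨ht.1, ht.2.trans (min_le_left _ _)⟩
  have h0T : (0 : ℝ) ∈ Icc 0 T := ⟨le_rfl, htT.1.trans htT.2⟩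
  have hinner : ∫ x in ball c r, ρ 0 x ∂μ ≤ ∫ x, φ x * ρ 0 x ∂μ :=
    setIntegral_le_integral_mul measurableSet_ball (fun _ => φ.nonneg)
      (fun _ hx => φ.one_of_mem_closedBall (ball_subset_closedBall hx)) (hρ 0 h0T)
      (h.integrable_mul h0T hφ.continuous)
  have houter : ∫ x, φ x * ρ t x ∂μ ≤ ∫ x in ball c R, ρ t x ∂μ :=
    integral_mul_le_setIntegral (fun _ => φ.le_one)
      (fun _ hx => φ.zero_of_le_dist (not_lt.1 hx)) (hρ t htT) (h.integrable htT)
      (h.integrable_mul htT hφ.continuous)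
  have hrate := h.norm_integral_mul_sub_le (convex_Icc 0 T) hρ henergy hφ hC h0T htT
  rw [hL, sub_zero, norm_of_nonneg ht.1] at hrate
  have htime : C * ((L + M) / 2) * t ≤ |C * ((L + M) / 2)| * T₁ :=
    mul_le_mul (le_abs_self _) (ht.2.trans (min_le_right _ _)) ht.1 (abs_nonneg _)
  linarith [neg_le_of_abs_le hrate]

end ContinuityEquation

/-- Persistence of mass near the origin for a short time (estimate (t2) of the paper):
if ∫_{B_N} ρ(0) ≥ 1/2 and ∫ ρ|u|² ≤ M on [0,T], then there is a time T₁ depending only on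
M, N and ‖ρ(0)‖_{L¹} such that ∫_{B_{2N}} ρ(t) ≥ 1/4 for 0 ≤ t ≤ min(T,T₁). -/
theorem mass_persistence (N : ℝ) (hN : 1 ≤ N) (M L : ℝ) (hM : 0 < M) (hL : 0 < L) :
    ∃ T₁ : ℝ, 0 < T₁ ∧ ∀ T : ℝ, 0 < T →
      ∀ (u : ℝ → E2 → E2) (ρ : ℝ → E2 → ℝ),
        ContDiff ℝ 1 (fun q : ℝ × E2 => u q.1 q.2) →
        ContDiff ℝ 1 (fun q : ℝ × E2 => ρ q.1 q.2) →
        (∀ t ∈ Icc (0 : ℝ) T, ∀ x, 0 ≤ ρ t x) →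
        (∃ Kset : Set E2, IsCompact Kset ∧ ∀ t ∈ Icc (0 : ℝ) T, ∀ x ∉ Kset, ρ t x = 0) →
        (∀ t ∈ Icc (0 : ℝ) T, ∀ x : E2,
          deriv (fun s => ρ s x) t + div2 (fun y => ρ t y • u t y) x = 0) →
        (1 / 2 : ℝ) ≤ (∫ x in ball (0 : E2) N, ρ 0 x) →
        (∀ t ∈ Icc (0 : ℝ) T, (∫ x : E2, ρ t x * ‖u t x‖ ^ 2) ≤ M) →
        (∫ x : E2, ρ 0 x) = L →
        ∀ t ∈ Icc (0 : ℝ) (min T T₁),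
          (1 / 4 : ℝ) ≤ ∫ x in ball (0 : E2) (2 * N), ρ t x := by
  obtain ⟨T₁, hT₁, hmain⟩ := mass_persistence_general (volume : Measure E2) 0
    (by linarith : 0 < N) (by linarith : N < 2 * N) (by norm_num : (1 / 4 : ℝ) < 1 / 2) M L
  exact ⟨T₁, hT₁, fun T _ u ρ hu hρ hnonneg hK heq => hmain T u ρ
    ⟨hρ, fun t _ => hu.comp (contDiff_prodMk_right t), hK, div2_eq_divergence ▸ heq⟩ hnonneg⟩
end
end
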